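/- There is a short exact sequence of graded left A(1)-modules 0 → Σ² A(1)/(Sq¹, Sq³) → A(1)/(Sq³) → A(1)/(Sq²) → 0 — precisely: the quotient map A(1)/(Sq³) → A(1)/(Sq²) (well-defined since Sq³ = Sq¹Sq² lies in the left ideal (Sq²)) is surjective with kernel generated by the class of Sq², and that kernel is isomorphic to Σ² A(1)/(Sq¹,Sq³). -/

import Mathlib

noncomputable section

/-- Relations defining A(1): (Sq¹)² = 0, Sq²Sq² = Sq¹Sq²Sq¹, Sq²Sq¹Sq²Sq¹ = Sq¹Sq²Sq¹Sq². -/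
inductive A1Rel : FreeAlgebra (ZMod 2) (Fin 2) → FreeAlgebra (ZMod 2) (Fin 2) → Prop
  | sq1_sq1 : A1Rel (FreeAlgebra.ι (ZMod 2) (0 : Fin 2) * FreeAlgebra.ι (ZMod 2) 0) 0
  | adem : A1Rel (FreeAlgebra.ι (ZMod 2) (1 : Fin 2) * FreeAlgebra.ι (ZMod 2) 1)
      (FreeAlgebra.ι (ZMod 2) (0 : Fin 2) * FreeAlgebra.ι (ZMod 2) 1 * FreeAlgebra.ι (ZMod 2) 0)
  | top : A1Rel
      (FreeAlgebra.ι (ZMod 2) (1 : Fin 2) * FreeAlgebra.ι (ZMod 2) 0 *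
        FreeAlgebra.ι (ZMod 2) 1 * FreeAlgebra.ι (ZMod 2) 0)
      (FreeAlgebra.ι (ZMod 2) (0 : Fin 2) * FreeAlgebra.ι (ZMod 2) 1 *
        FreeAlgebra.ι (ZMod 2) 0 * FreeAlgebra.ι (ZMod 2) 1)

/-- The algebra A(1), subalgebra of the mod-2 Steenrod algebra generated by Sq¹, Sq². -/
abbrev A1 := RingQuot A1Rel

def Sq1 : A1 := RingQuot.mkAlgHom (ZMod 2) A1Rel (FreeAlgebra.ι (ZMod 2) 0)
def Sq2 : A1 := RingQuot.mkAlgHom (ZMod 2) A1Rel (FreeAlgebra.ι (ZMod 2) 1)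
def Sq3 : A1 := Sq1 * Sq2

/-- Generators, for building monomial words. -/
def A1gen : Fin 2 → A1
  | 0 => Sq1
  | 1 => Sq2

/-- Weight of a word: Sq¹ has degree 1, Sq² has degree 2. -/
def A1wt (l : List (Fin 2)) : ℕ := (l.map fun i => (i : ℕ) + 1).sum

/-- The product of a word of generators. -/
def A1word (l : List (Fin 2)) : A1 := (l.map A1gen).prod

/-- The degree-`n` graded component of A(1): the F₂-span of monomials of weight `n`. -/
def A1deg (n : ℕ) : Submodule (ZMod 2) A1 :=
  Submodule.span (ZMod 2) {x | ∃ l, A1wt l = n ∧ x = A1word l}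

/-- The degree-`n` component of a cyclic module A(1)/I. -/
def A1qdeg (I : Submodule A1 A1) (n : ℕ) : Submodule (ZMod 2) (A1 ⧸ I) :=
  Submodule.map (I.mkQ.restrictScalars (ZMod 2)) (A1deg n)

theorem Sq1_mul_Sq1 : Sq1 * Sq1 = 0 := by
  simpa [Sq1] using RingQuot.mkAlgHom_rel (ZMod 2) A1Rel.sq1_sq1

theorem Sq2_mul_Sq2 : Sq2 * Sq2 = Sq1 * Sq2 * Sq1 := by
  simpa [Sq1, Sq2] using RingQuot.mkAlgHom_rel (ZMod 2) A1Rel.adem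

theorem Sq3_mul_Sq2 : Sq3 * Sq2 = 0 := by
  rw [Sq3, mul_assoc, Sq2_mul_Sq2, mul_assoc Sq1 Sq2 Sq1, ← mul_assoc, Sq1_mul_Sq1, zero_mul]

/-- A property of elements of `A1` that is preserved by sums and by left multiplication by the
generators, and that holds for scalars, holds everywhere. -/
theorem A1_left_induction {p : A1 → Prop} (scalar : ∀ r : ZMod 2, p (algebraMap (ZMod 2) A1 r))
    (add : ∀ x y, p x → p y → p (x + y)) (sq1 : ∀ x, p x → p (Sq1 * x))
    (sq2 : ∀ x, p x → p (Sq2 * x)) (x : A1) : p x := by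
  have smul : ∀ (r : ZMod 2) (y : A1), p y → p (r • y) := by
    intro r y hy
    have h : r = 0 ∨ r = 1 := by revert r; decide
    rcases h with rfl | rfl
    · simpa using scalar 0
    · simpa using hy
  have key : ∀ w : FreeAlgebra (ZMod 2) (Fin 2), ∀ y, p y →
      p (RingQuot.mkAlgHom (ZMod 2) A1Rel w * y) := by
    intro w
    induction w using FreeAlgebra.induction with
    | grade0 r =>
      intro y hy
      rw [AlgHom.commutes, ← Algebra.smul_def]
      exact smul r y hy
    | grade1 i =>
      intro y hy
      fin_cases i
      · exact sq1 y hy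
      · exact sq2 y hy
    | mul a b ha hb =>
      intro y hy
      rw [map_mul, mul_assoc]
      exact ha _ (hb y hy)
    | add a b ha hb =>
      intro y hy
      rw [map_add, add_mul]
      exact add _ _ (ha y hy) (hb y hy)
  obtain ⟨w, rfl⟩ := RingQuot.mkAlgHom_surjective (ZMod 2) A1Rel x
  simpa using key w 1 (by simpa using scalar 1)

/-- The classes of `1` and `Sq2` span `A1 ⧸ (Sq1, Sq3)` over `ZMod 2`. -/
theorem exists_sub_mem_span_Sq1_Sq3 (x : A1) :
    ∃ r s : ZMod 2, x - (r • 1 + s • Sq2) ∈ Submodule.span A1 {Sq1, Sq3} := by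
  have h1 : Sq1 ∈ Submodule.span A1 {Sq1, Sq3} := Submodule.subset_span (by simp)
  have h3 : Sq3 ∈ Submodule.span A1 {Sq1, Sq3} := Submodule.subset_span (by simp)
  have smul_mem : ∀ (r : ZMod 2) {y : A1}, y ∈ Submodule.span A1 {Sq1, Sq3} →
      r • y ∈ Submodule.span A1 {Sq1, Sq3} := by
    intro r y hy
    rw [Algebra.smul_def]
    exact Submodule.smul_mem _ _ hy
  induction x using A1_left_induction with
  | scalar r => exact ⟨r, 0, by simp [Algebra.smul_def]⟩
  | add x y hx hy =>
    obtain ⟨r, s, h⟩ := hx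
    obtain ⟨r', s', h'⟩ := hy
    refine ⟨r + r', s + s', ?_⟩
    convert Submodule.add_mem _ h h' using 1
    module
  | sq1 x hx =>
    obtain ⟨r, s, h⟩ := hx
    refine ⟨0, 0, ?_⟩
    have h' := Submodule.smul_mem _ Sq1 h
    convert Submodule.add_mem _ h' (Submodule.add_mem _ (smul_mem r h1) (smul_mem s h3)) using 1
    simp only [smul_eq_mul, mul_sub, mul_add, mul_smul_comm, mul_one, Sq3]
    module
  | sq2 x hx =>
    obtain ⟨r, s, h⟩ := hx
    refine ⟨0, r, ?_⟩
    have h' := Submodule.smul_mem _ Sq2 h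
    have h22 : Sq2 * Sq2 ∈ Submodule.span A1 {Sq1, Sq3} := by
      rw [Sq2_mul_Sq2]
      exact Submodule.smul_mem _ _ h1
    convert Submodule.add_mem _ h' (smul_mem s h22) using 1
    simp only [smul_eq_mul, mul_sub, mul_add, mul_smul_comm, mul_one]
    module

/-- The matrices of `Sq1` and `Sq2` acting on `A1 ⧸ (Sq3)` in the basis
`1, Sq1, Sq2, Sq2 Sq1, Sq1 Sq2 Sq1`. -/
def A1genMatrix : Fin 2 → Matrix (Fin 5) (Fin 5) (ZMod 2)
  | 0 => !![0, 0, 0, 0, 0; 1, 0, 0, 0, 0; 0, 0, 0, 0, 0; 0, 0, 0, 0, 0; 0, 0, 0, 1, 0]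
  | 1 => !![0, 0, 0, 0, 0; 0, 0, 0, 0, 0; 1, 0, 0, 0, 0; 0, 1, 0, 0, 0; 0, 0, 1, 0, 0]

/-- The matrix representation of `A1` on `A1 ⧸ (Sq3)`. -/
def A1toMatrix : A1 →ₐ[ZMod 2] Matrix (Fin 5) (Fin 5) (ZMod 2) :=
  RingQuot.liftAlgHom (ZMod 2) ⟨FreeAlgebra.lift (ZMod 2) A1genMatrix, by
    rintro _ _ (_ | _ | _) <;> simp only [map_mul, map_zero, FreeAlgebra.lift_ι_apply] <;> decide⟩

theorem A1toMatrix_Sq1 : A1toMatrix Sq1 = A1genMatrix 0 := by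
  simp [A1toMatrix, Sq1]

theorem A1toMatrix_Sq2 : A1toMatrix Sq2 = A1genMatrix 1 := by
  simp [A1toMatrix, Sq2]

/-- The classes of `Sq2` and `Sq2 * Sq2` in `A1 ⧸ (Sq3)` are linearly independent. -/
theorem eq_zero_of_smul_add_smul_mem_span_Sq3 {r s : ZMod 2}
    (h : r • Sq2 + s • (Sq2 * Sq2) ∈ Submodule.span A1 {Sq3}) : r = 0 ∧ s = 0 := by
  obtain ⟨w, hw⟩ := Submodule.mem_span_singleton.mp h
  have hM := congrArg A1toMatrix hw
  simp only [smul_eq_mul, Sq3, map_add, map_smul, map_mul, A1toMatrix_Sq1, A1toMatrix_Sq2] at hM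
  have hcol : ∀ i, (A1genMatrix 0 * A1genMatrix 1) i 0 = 0 := by decide
  have entry : ∀ i, r * A1genMatrix 1 i 0 + s * (A1genMatrix 1 * A1genMatrix 1) i 0 = 0 := by
    intro i
    have hi := congrFun (congrFun hM i) 0
    rw [Matrix.mul_apply] at hi
    simpa only [hcol, mul_zero, Finset.sum_const_zero, Matrix.add_apply, Matrix.smul_apply,
      smul_eq_mul] using hi.symm
  have h2 := entry 2
  have h4 := entry 4
  clear entry hM hw h
  revert r s
  decide

/-- The annihilator of the class of `Sq2` in `A1 ⧸ (Sq3)` is the left ideal `(Sq1, Sq3)`. -/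
theorem mul_Sq2_mem_span_Sq3_iff (x : A1) :
    x * Sq2 ∈ Submodule.span A1 {Sq3} ↔ x ∈ Submodule.span A1 {Sq1, Sq3} := by
  have of_mem : ∀ y ∈ Submodule.span A1 {Sq1, Sq3}, y * Sq2 ∈ Submodule.span A1 {Sq3} := by
    intro y hy
    obtain ⟨a, b, rfl⟩ := Submodule.mem_span_pair.mp hy
    refine Submodule.mem_span_singleton.mpr ⟨a, ?_⟩
    rw [smul_eq_mul, smul_eq_mul, smul_eq_mul, add_mul, mul_assoc b, Sq3_mul_Sq2, mul_zero,
      add_zero, mul_assoc, Sq3]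
  refine ⟨fun hx => ?_, of_mem x⟩
  obtain ⟨r, s, h⟩ := exists_sub_mem_span_Sq1_Sq3 x
  have hrs : r • Sq2 + s • (Sq2 * Sq2) ∈ Submodule.span A1 {Sq3} := by
    convert Submodule.sub_mem _ hx (of_mem _ h) using 1
    simp only [sub_mul, add_mul, smul_mul_assoc, one_mul]
    module
  obtain ⟨rfl, rfl⟩ := eq_zero_of_smul_add_smul_mem_span_Sq3 hrs
  simpa using h

/-- The quotient map A(1)/(Sq³) → A(1)/(Sq²) is a well-defined surjection of left
A(1)-modules whose kernel is generated by the class of Sq², and that kernel is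
isomorphic to Σ² A(1)/(Sq¹,Sq³); i.e. there is a short exact sequence
`0 → Σ² A(1)/(Sq¹,Sq³) → A(1)/(Sq³) → A(1)/(Sq²) → 0`. -/
theorem ses_eta2_c2 :
    ∃ g : (A1 ⧸ (Submodule.span A1 {Sq3})) →ₗ[A1] (A1 ⧸ (Submodule.span A1 {Sq2})),
      (∀ x : A1, g ((Submodule.span A1 {Sq3}).mkQ x) = (Submodule.span A1 {Sq2}).mkQ x) ∧
      Function.Surjective g ∧
      LinearMap.ker g = Submodule.span A1 {(Submodule.span A1 {Sq3}).mkQ Sq2} ∧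
      Nonempty ((A1 ⧸ (Submodule.span A1 {Sq1, Sq3})) ≃ₗ[A1] (LinearMap.ker g)) := by
  have hle : Submodule.span A1 {Sq3} ≤ Submodule.span A1 {Sq2} := by
    rw [Submodule.span_singleton_le_iff_mem]
    exact Submodule.smul_mem _ Sq1 (Submodule.mem_span_singleton_self Sq2)
  have hker : LinearMap.ker (Submodule.factor hle) =
      Submodule.span A1 {(Submodule.span A1 {Sq3}).mkQ Sq2} := by
    rw [Submodule.factor, Submodule.ker_mapQ, Submodule.comap_id, Submodule.map_span,
      Set.image_singleton]
  refine ⟨Submodule.factor hle, fun x => rfl, Submodule.factor_surjective hle, hker, ?_⟩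
  let f := LinearMap.toSpanSingleton A1 _ ((Submodule.span A1 {Sq3}).mkQ Sq2)
  have hf : Submodule.span A1 {Sq1, Sq3} = LinearMap.ker f := by
    ext x
    rw [← mul_Sq2_mem_span_Sq3_iff, LinearMap.mem_ker, LinearMap.toSpanSingleton_apply,
      ← map_smul, Submodule.mkQ_apply, Submodule.Quotient.mk_eq_zero, smul_eq_mul]
  have hrange : LinearMap.range f = LinearMap.ker (Submodule.factor hle) := by
    rw [hker, LinearMap.range_toSpanSingleton]
  exact ⟨(Submodule.quotEquivOfEq _ _ hf).trans
    (f.quotKerEquivRange.trans (LinearEquiv.ofEq _ _ hrange))⟩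

end
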